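/- Let q ∈ ℕ and 1 ≤ j ≤ q. Then there exists a constant C = C(j,q) such that for every K > 0, as r → ∞, ∑_{n ≥ j, n ≡ j (mod q)} (1/n)·(e^{−r/n} − 1) = −(1/q)·log r + C + O(r^{−K}); that is, the error is superpolynomially small in r. -/

import Mathlib

open scoped BigOperators

namespace SEL
open Filter Topology MeasureTheory Asymptotics FourierTransform Polynomial

noncomputable def P : ℕ → ℝ[X]
  | 0 => X ^ 2
  | n + 1 => X ^ 2 * (P n - derivative (P n))

noncomputable def phi (n : ℕ) (x : ℝ) : ℝ := (P n).eval x⁻¹ * expNegInvGlue x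

lemma phi_deriv (n : ℕ) (x : ℝ) : HasDerivAt (phi n) (phi (n + 1) x) x :=
  expNegInvGlue.hasDerivAt_polynomial_eval_inv_mul (P n) x

lemma phi_cont (n : ℕ) : Continuous (phi n) :=
  continuous_iff_continuousAt.2 fun x => (phi_deriv n x).continuousAt

lemma glue_le_one (x : ℝ) : expNegInvGlue x ≤ 1 := by
  unfold expNegInvGlue
  split_ifs with h
  · exact zero_le_one
  · rw [Real.exp_le_one_iff]
    push Not at h
    have := inv_pos.2 h
    linarith

lemma P_dvd (n : ℕ) : ∃ Q : ℝ[X], P n = X ^ 2 * Q := by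
  cases n with
  | zero => exact ⟨1, by simp [P]⟩
  | succ n => exact ⟨_, rfl⟩

lemma phi_bound (n : ℕ) : ∃ C : ℝ, 0 ≤ C ∧ ∀ x, |phi n x| ≤ C * (1 + x ^ 2)⁻¹ := by
  obtain ⟨Q, hQ⟩ := P_dvd n
  obtain ⟨M, hM⟩ := (isCompact_Icc (a := (-1 : ℝ)) (b := 1)).exists_bound_of_continuousOn
    (f := fun x => Q.eval x) Q.continuous.continuousOn
  obtain ⟨N, hN⟩ := (isCompact_Icc (a := (-1 : ℝ)) (b := 1)).exists_bound_of_continuousOn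
    (f := phi n) (phi_cont n).continuousOn
  have hM0 : 0 ≤ M := (norm_nonneg _).trans (hM 0 (by simp))
  have hN0 : 0 ≤ N := (norm_nonneg _).trans (hN 0 (by simp))
  refine ⟨2 * (M + N), by positivity, fun x => ?_⟩
  rw [← div_eq_mul_inv, le_div_iff₀ (by positivity)]
  rcases le_total |x| 1 with hx | hx
  · have h1 := hN x (by rwa [Set.mem_Icc, ← abs_le])
    rw [Real.norm_eq_abs] at h1
    have h2 : x ^ 2 ≤ 1 := by rw [← sq_abs]; nlinarith [abs_nonneg x]
    nlinarith [abs_nonneg (phi n x)]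
  · have hx0 : x ≠ 0 := by rintro rfl; norm_num at hx
    have h1 := hM x⁻¹ (by
      rw [Set.mem_Icc, ← abs_le, abs_inv]; exact inv_le_one_of_one_le₀ hx)
    rw [Real.norm_eq_abs] at h1
    have h2 : 1 ≤ x ^ 2 := by rw [← sq_abs]; nlinarith
    have h3 : |phi n x| * x ^ 2 ≤ M := by
      have : |phi n x| * x ^ 2 = |Q.eval x⁻¹| * expNegInvGlue x := by
        rw [phi, hQ, abs_mul, abs_of_nonneg (expNegInvGlue.nonneg x)]
        simp only [eval_mul, eval_pow, eval_X, abs_mul, abs_pow, abs_inv]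
        field_simp
        rw [sq_abs]
      rw [this]
      nlinarith [glue_le_one x, expNegInvGlue.nonneg x, abs_nonneg (Q.eval x⁻¹)]
    nlinarith [abs_nonneg (phi n x)]

lemma phi_int (n : ℕ) : Integrable (phi n) := by
  obtain ⟨C, hC, h⟩ := phi_bound n
  exact (integrable_inv_one_add_sq.const_mul C).mono' (phi_cont n).aestronglyMeasurable
    (Eventually.of_forall h)

lemma phi_integral : ∫ x, phi 0 x = 1 := by
  have := integral_of_hasDerivAt_of_tendsto (f := expNegInvGlue) (f' := phi 0) (m := 0) (n := 1)
    (fun x => by simpa [phi, P] using expNegInvGlue.hasDerivAt_polynomial_eval_inv_mul 1 x)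
    (phi_int 0) ?_ ?_
  · simpa using this
  · refine tendsto_const_nhds.congr' ?_
    filter_upwards [eventually_le_atBot (0 : ℝ)] with x hx
    exact (expNegInvGlue.zero_of_nonpos hx).symm
  · have : Tendsto (fun x : ℝ => Real.exp (-x⁻¹)) atTop (𝓝 1) := by
      have h := (tendsto_inv_atTop_zero (𝕜 := ℝ)).neg
      have h2 := (Real.continuous_exp.tendsto _).comp h
      rw [neg_zero, Real.exp_zero] at h2
      exact h2
    refine this.congr' ?_
    filter_upwards [eventually_gt_atTop (0 : ℝ)] with x hx
    simp [expNegInvGlue, not_le.2 hx]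

/-- scaled complex-valued version -/
noncomputable def G (a : ℝ) (n : ℕ) (x : ℝ) : ℂ := ((a ^ n * phi n (a * x) : ℝ) : ℂ)

lemma G_deriv (a : ℝ) (n : ℕ) (x : ℝ) : HasDerivAt (G a n) (G a (n + 1) x) x := by
  have h1 : HasDerivAt (fun x : ℝ => a * x) a x := by simpa using (hasDerivAt_id x).const_mul a
  have h := (((phi_deriv n (a * x)).comp x h1).const_mul (a ^ n)).ofReal_comp
  have e : G a (n + 1) x = ((a ^ n * (phi (n + 1) (a * x) * a) : ℝ) : ℂ) := by
    unfold G
    congr 1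
    ring
  rw [e]
  exact h

lemma G_int {a : ℝ} (ha : 0 < a) (n : ℕ) : Integrable (G a n) :=
  (((phi_int n).comp_mul_left' ha.ne').const_mul (a ^ n)).ofReal

lemma G_norm_integral {a : ℝ} (ha : 0 < a) (n : ℕ) :
    ∫ x, ‖G a (n + 1) x‖ = a ^ n * ∫ x, |phi (n + 1) x| := by
  have : ∀ x, ‖G a (n + 1) x‖ = a ^ (n + 1) * |phi (n + 1) (a * x)| := fun x => by
    rw [G, Complex.norm_real, Real.norm_eq_abs, abs_mul, abs_of_pos (by positivity)]
  simp_rw [this]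
  rw [integral_const_mul, Measure.integral_comp_mul_left (fun y => |phi (n + 1) y|),
    abs_of_pos (by positivity), smul_eq_mul]
  field_simp
  ring

lemma G_integral {a : ℝ} (ha : 0 < a) : ∫ x, G a 0 x = ((a⁻¹ : ℝ) : ℂ) := by
  unfold G
  rw [integral_complex_ofReal]
  simp only [pow_zero, one_mul]
  rw [Measure.integral_comp_mul_left (phi 0), phi_integral, abs_of_pos (by positivity)]
  simp

lemma G_fourier {a : ℝ} (ha : 0 < a) (n : ℕ) (x : ℝ) :
    𝓕 (G a n) x = (2 * Real.pi * Complex.I * x) ^ n * 𝓕 (G a 0) x := by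
  induction n with
  | zero => simp
  | succ n ih =>
    have hd : deriv (G a n) = G a (n + 1) := funext fun x => (G_deriv a n x).deriv
    have h := Real.fourier_deriv (G_int ha n) (fun x => (G_deriv a n x).differentiableAt)
      (hd ▸ G_int ha (n + 1))
    rw [hd] at h
    rw [h]
    simp only [smul_eq_mul]
    rw [ih, pow_succ]
    ring

lemma G_fourier_bound {a : ℝ} (ha : 0 < a) (n : ℕ) {x : ℝ} (hx : x ≠ 0) :
    ‖𝓕 (G a 0) x‖ ≤ (∫ y, ‖G a n y‖) * (1 / |x| ^ n) := by
  have h1 : ‖𝓕 (G a n) x‖ ≤ ∫ y, ‖G a n y‖ := by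
    exact VectorFourier.norm_fourierIntegral_le_integral_norm _ _ _ _ _
  rw [G_fourier ha, norm_mul, norm_pow] at h1
  have h2 : ‖(2 * Real.pi * Complex.I * x : ℂ)‖ = 2 * Real.pi * |x| := by
    simp [abs_of_pos Real.pi_pos]
  rw [h2] at h1
  have hx' : 0 < |x| := abs_pos.2 hx
  have h3 : |x| ^ n ≤ (2 * Real.pi * |x|) ^ n := by
    gcongr
    nlinarith [Real.pi_gt_three]
  rw [mul_one_div, le_div_iff₀ (by positivity), mul_comm]
  exact (mul_le_mul_of_nonneg_right h3 (norm_nonneg _)).trans h1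

lemma poisson_bound {a : ℝ} (ha : 0 < a) (n : ℕ) (t : ℝ) :
    ‖(∑' m : ℤ, G a 0 (t + m)) - ((a⁻¹ : ℝ) : ℂ)‖ ≤
      (∫ y, ‖G a (n + 2) y‖) * ∑' k : ℤ, |1 / (k : ℝ) ^ (n + 2)| := by
  have hs : ∀ n : ℕ, Summable fun k : ℤ => |1 / (k : ℝ) ^ (n + 2)| := fun n => by
    rw [summable_abs_iff, Real.summable_one_div_int_pow]; omega
  have hO1 : G a 0 =O[cocompact ℝ] (fun x : ℝ => |x| ^ (-2 : ℝ)) := by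
    obtain ⟨C, hC, h⟩ := phi_bound 0
    refine IsBigO.of_bound (C / a ^ 2) ?_
    have : ∀ᶠ x : ℝ in cocompact ℝ, x ≠ 0 := by
      filter_upwards [(isCompact_singleton (x := (0 : ℝ))).compl_mem_cocompact] with x hx
      exact hx
    filter_upwards [this] with x hx
    have hx2 : 0 < x ^ 2 := by positivity
    rw [G, Complex.norm_real, Real.norm_eq_abs, pow_zero, one_mul, Real.norm_eq_abs,
      Real.rpow_neg (abs_nonneg x), Real.rpow_two, sq_abs, abs_of_pos (inv_pos.2 hx2)]
    refine (h _).trans ?_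
    rw [div_mul_eq_mul_div, mul_div_assoc]
    refine mul_le_mul_of_nonneg_left ?_ hC
    rw [← one_div, ← one_div, div_div, ]
    refine one_div_le_one_div_of_le (by positivity) ?_
    nlinarith
  have hO2 : 𝓕 (G a 0) =O[cocompact ℝ] (fun x : ℝ => |x| ^ (-2 : ℝ)) := by
    refine IsBigO.of_bound (∫ y, ‖G a 2 y‖) ?_
    filter_upwards [(isCompact_singleton (x := (0 : ℝ))).compl_mem_cocompact] with x hx
    have hx : x ≠ 0 := hx
    refine (G_fourier_bound ha 2 hx).trans (le_of_eq ?_)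
    rw [Real.norm_eq_abs, Real.rpow_neg (abs_nonneg x), Real.rpow_two, sq_abs,
      abs_of_nonneg (inv_nonneg.2 (sq_nonneg x)), one_div]
  have hc : Continuous (G a 0) := continuous_iff_continuousAt.2 fun x => (G_deriv a 0 x).continuousAt
  rw [Real.tsum_eq_tsum_fourier_of_rpow_decay hc one_lt_two hO1 hO2 t]
  have h0 : 𝓕 (G a 0) 0 = ((a⁻¹ : ℝ) : ℂ) := by
    rw [← G_integral ha, Real.fourier_real_eq_integral_exp_smul]
    simp
  set f : ℤ → ℂ := fun k => 𝓕 (G a 0) k * fourier k (t : UnitAddCircle) with hf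
  have hfn : ∀ k : ℤ, k ≠ 0 → ∀ n : ℕ,
      ‖f k‖ ≤ (∫ y, ‖G a (n + 2) y‖) * |1 / (k : ℝ) ^ (n + 2)| := fun k hk n => by
    have hk' : (k : ℝ) ≠ 0 := by exact_mod_cast hk
    simp only [hf, norm_mul]
    have : ‖fourier k (t : UnitAddCircle)‖ = 1 := by
      rw [fourier_apply, Circle.norm_coe]
    rw [this, mul_one, abs_div, abs_pow, abs_one]
    exact G_fourier_bound ha (n + 2) hk'
  have hg : ∀ k : ℤ, ‖(if k = 0 then 0 else f k)‖ ≤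
      (∫ y, ‖G a (n + 2) y‖) * |1 / (k : ℝ) ^ (n + 2)| := fun k => by
    split_ifs with h
    · simp [h]
    · exact hfn k h n
  have hsum := (hs n).mul_left (∫ y, ‖G a (n + 2) y‖)
  have hgs : Summable fun k : ℤ => (if k = 0 then 0 else f k) := Summable.of_norm_bounded hsum hg
  have hfs : Summable f := by
    rw [← Set.Finite.summable_compl_iff (Set.finite_singleton (0 : ℤ))]
    refine (hgs.subtype ({0} : Set ℤ)ᶜ).congr fun k => ?_
    have : (k : ℤ) ≠ 0 := k.2
    simp [this]
  rw [hfs.tsum_eq_add_tsum_ite 0]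
  have hf0 : f 0 = ((a⁻¹ : ℝ) : ℂ) := by simp [hf, h0]
  rw [hf0, add_sub_cancel_left]
  refine (norm_tsum_le_tsum_norm hgs.norm).trans ?_
  rw [← tsum_mul_left]
  exact hgs.norm.tsum_le_tsum hg hsum

/-- superpolynomial estimate for the lattice sum -/
lemma sum_bound (q j : ℕ) (hj : 1 ≤ j) (hjq : j ≤ q) (n : ℕ) : ∃ A : ℝ, ∀ r : ℝ, 0 < r →
    |(∑' m : ℕ, phi 0 (((j + q * m : ℕ) : ℝ) / r)) - r / q| ≤ A / r ^ (n + 1) := by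
  have hq : (0 : ℝ) < q := by exact_mod_cast (by omega : 0 < q)
  refine ⟨(q : ℝ) ^ (n + 1) * (∫ x, |phi (n + 2) x|) * ∑' k : ℤ, |1 / (k : ℝ) ^ (n + 2)|,
    fun r hr => ?_⟩
  have ha : 0 < (q : ℝ) / r := by positivity
  have h := poisson_bound ha n ((j : ℝ) / q)
  have e1 : ∀ m : ℤ, G (q / r) 0 ((j : ℝ) / q + m) = ((phi 0 ((j + q * m) / r) : ℝ) : ℂ) := by
    intro m
    rw [G, pow_zero, one_mul]
    congr 2
    field_simp
  simp_rw [e1] at h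
  rw [← Complex.ofReal_tsum, ← Complex.ofReal_sub, Complex.norm_real, Real.norm_eq_abs,
    G_norm_integral ha, inv_div] at h
  have e2 : ∑' m : ℤ, phi 0 (((j : ℝ) + q * m) / r) =
      ∑' m : ℕ, phi 0 (((j + q * m : ℕ) : ℝ) / r) := by
    rw [← Function.Injective.tsum_eq (g := ((↑) : ℕ → ℤ)) Nat.cast_injective]
    · push_cast; rfl
    · intro m hm
      by_contra hcon
      apply hm
      have hm0 : m < 0 := by
        by_contra h0
        exact hcon ⟨m.toNat, by simp; omega⟩
      have h1 : (m : ℝ) ≤ -1 := by exact_mod_cast (by omega : m ≤ -1)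
      have h2 : (j : ℝ) ≤ q := by exact_mod_cast hjq
      have : ((j : ℝ) + q * m) / r ≤ 0 := div_nonpos_of_nonpos_of_nonneg (by nlinarith) hr.le
      simp [phi, expNegInvGlue.zero_of_nonpos this]
  rw [e2] at h
  refine h.trans (le_of_eq ?_)
  rw [div_pow]
  ring

lemma integrate (D D' : ℝ → ℝ) (hD : ∀ r, 0 < r → HasDerivAt D (D' r) r)
    (hb : ∀ K : ℕ, 0 < K → ∃ A, ∀ r, 1 ≤ r → |D' r| ≤ A / r ^ (K + 1)) :
    ∃ C : ℝ, ∀ K : ℕ, 0 < K → ∃ C₁ : ℝ, ∀ r : ℝ, 1 ≤ r → |D r - C| ≤ C₁ / r ^ K := by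
  have key : ∀ K : ℕ, 0 < K → ∃ A, 0 ≤ A ∧ ∀ r s, 1 ≤ r → r ≤ s → |D s - D r| ≤ A / r ^ K := by
    intro K hK
    obtain ⟨A, hA⟩ := hb K hK
    have hA0 : 0 ≤ A := by simpa using (abs_nonneg _).trans (hA 1 le_rfl)
    have hK' : (0 : ℝ) < K := by exact_mod_cast hK
    refine ⟨A / K, by positivity, fun r s hr hrs => ?_⟩
    have hB : ∀ x : ℝ, 0 < x → HasDerivAt (fun x : ℝ => (A / K) * (x ^ K)⁻¹) (-(A / x ^ (K + 1))) x := by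
      intro x hx
      have h := ((hasDerivAt_pow K x).inv (by positivity)).const_mul (A / K)
      have e : -(A / x ^ (K + 1)) = A / K * (-(K * x ^ (K - 1)) / (x ^ K) ^ 2) := by
        obtain ⟨k, rfl⟩ : ∃ k, K = k + 1 := ⟨K - 1, by omega⟩
        rw [Nat.add_sub_cancel]
        field_simp
        ring
      rw [e]
      exact h
    have hpos : ∀ x ∈ Set.Icc r s, 0 < x := fun x hx => by linarith [hx.1]
    have h1 : AntitoneOn (fun x => D x + (A / K) * (x ^ K)⁻¹) (Set.Icc r s) := by
      refine antitoneOn_of_deriv_nonpos (convex_Icc r s)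
        (fun x hx => ((hD x (hpos x hx)).add (hB x (hpos x hx))).continuousAt.continuousWithinAt)
        (fun x hx => ((hD x (hpos x (interior_subset hx))).add
          (hB x (hpos x (interior_subset hx)))).differentiableAt.differentiableWithinAt) ?_
      intro x hx
      have hx1 : 1 ≤ x := hr.trans (interior_subset hx).1
      have hx := hpos x (interior_subset hx)
      have e := ((hD x hx).add (hB x hx)).deriv
      have := (abs_le.1 (hA x hx1)).2
      refine (le_of_eq e).trans (by linarith)
    have h2 : MonotoneOn (fun x => D x - (A / K) * (x ^ K)⁻¹) (Set.Icc r s) := by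
      refine monotoneOn_of_deriv_nonneg (convex_Icc r s)
        (fun x hx => ((hD x (hpos x hx)).sub (hB x (hpos x hx))).continuousAt.continuousWithinAt)
        (fun x hx => ((hD x (hpos x (interior_subset hx))).sub
          (hB x (hpos x (interior_subset hx)))).differentiableAt.differentiableWithinAt) ?_
      intro x hx
      have hx1 : 1 ≤ x := hr.trans (interior_subset hx).1
      have hx := hpos x (interior_subset hx)
      have e := ((hD x hx).sub (hB x hx)).deriv
      have := (abs_le.1 (hA x hx1)).1
      refine le_of_le_of_eq (by linarith) e.symm
    have g1 := h1 (Set.left_mem_Icc.2 hrs) (Set.right_mem_Icc.2 hrs) hrs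
    have g2 := h2 (Set.left_mem_Icc.2 hrs) (Set.right_mem_Icc.2 hrs) hrs
    have hs : 0 < s := by linarith
    have p1 : 0 ≤ (A / K) * (s ^ K)⁻¹ := by positivity
    simp only at g1 g2
    rw [abs_le, div_eq_mul_inv (A / K)]
    constructor <;> linarith
  obtain ⟨A, hA0, hA⟩ := key 1 one_pos
  have hcau : CauchySeq (fun n : ℕ => D (n + 1)) := by
    refine cauchySeq_of_le_tendsto_0' (fun n : ℕ => A * (1 / ((n : ℝ) + 1))) ?_ ?_
    · intro n m hnm
      have hnm' : (n : ℝ) ≤ m := by exact_mod_cast hnm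
      rw [dist_comm, Real.dist_eq]
      have := hA (n + 1) (m + 1) (by linarith [n.cast_nonneg (α := ℝ)]) (by linarith)
      simpa [div_eq_mul_inv] using this
    · simpa using (tendsto_one_div_add_atTop_nhds_zero_nat (𝕜 := ℝ)).const_mul A
  obtain ⟨C, hC⟩ := cauchySeq_tendsto_of_complete hcau
  refine ⟨C, fun K hK => ?_⟩
  obtain ⟨B, hB0, hB⟩ := key K hK
  refine ⟨B, fun r hr => ?_⟩
  have ht : Tendsto (fun n : ℕ => |D (n + 1) - D r|) atTop (𝓝 |C - D r|) :=
    (hC.sub_const (D r)).abs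
  rw [abs_sub_comm]
  refine le_of_tendsto ht ?_
  filter_upwards [eventually_ge_atTop ⌈r⌉₊] with n hn
  refine hB r _ hr ?_
  have : r ≤ n := Nat.ceil_le.1 hn
  linarith

end SEL

theorem sum_exp_log_superpolynomial (q j : ℕ) (hj : 1 ≤ j) (hjq : j ≤ q) :
    ∃ C : ℝ, ∀ K : ℕ, 0 < K → ∃ C₁ r₀ : ℝ, ∀ r : ℝ, r₀ ≤ r →
      |(∑' m : ℕ, (1 / ((j + q * m : ℕ) : ℝ)) *
            (Real.exp (-r / ((j + q * m : ℕ) : ℝ)) - 1)) -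
          (-(1 / (q : ℝ)) * Real.log r + C)| ≤ C₁ / r ^ K := by
  have hq : (0 : ℝ) < q := by exact_mod_cast (by omega : 0 < q)
  set N : ℕ → ℝ := fun m => ((j + q * m : ℕ) : ℝ) with hN
  have hNpos : ∀ m, 0 < N m := fun m => by
    simp only [hN]; exact_mod_cast (by omega : 0 < j + q * m)
  have hNge : ∀ m : ℕ, (m : ℝ) + 1 ≤ N m := fun m => by
    simp only [hN]
    have : m + 1 ≤ j + q * m := by nlinarith
    exact_mod_cast this
  have hu : Summable fun m : ℕ => 1 / N m ^ 2 := by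
    have h : Summable fun m : ℕ => 1 / ((m : ℝ) + 1) ^ 2 := by
      have := (summable_nat_add_iff 1).2 (Real.summable_one_div_nat_pow.2 one_lt_two)
      simpa using this
    refine Summable.of_nonneg_of_le (fun m => by positivity) (fun m => ?_) h
    have := hNge m
    gcongr
  have hS : ∀ r : ℝ, 0 < r → HasDerivAt (fun r => ∑' m : ℕ, (1 / N m) * (Real.exp (-r / N m) - 1))
      (∑' m : ℕ, -(1 / N m ^ 2 * Real.exp (-r / N m))) r := by
    intro r hr
    refine hasDerivAt_tsum_of_isPreconnected (F := ℝ)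
      (g := fun m r => (1 / N m) * (Real.exp (-r / N m) - 1))
      (g' := fun m r => -(1 / N m ^ 2 * Real.exp (-r / N m))) (t := Set.Ioi (0 : ℝ)) (y₀ := 1) hu isOpen_Ioi
      isPreconnected_Ioi ?_ ?_ (Set.mem_Ioi.2 one_pos) ?_ hr
    · intro m y hy
      have h1 : HasDerivAt (fun r : ℝ => -r / N m) (-1 / N m) y :=
        ((hasDerivAt_id y).neg).div_const (N m)
      have h := ((h1.exp).sub_const (1 : ℝ)).const_mul (1 / N m)
      have e : -(1 / N m ^ 2 * Real.exp (-y / N m)) =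
          1 / N m * (Real.exp (-y / N m) * (-1 / N m)) := by
        have := (hNpos m).ne'
        generalize Real.exp (-y / N m) = z
        field_simp
      simp only [e]
      exact h
    · intro m y hy
      have hy : 0 < y := hy
      have := hNpos m
      rw [norm_neg, Real.norm_eq_abs, abs_of_nonneg (by positivity)]
      refine mul_le_of_le_one_right (by positivity) (Real.exp_le_one_iff.2 ?_)
      exact div_nonpos_of_nonpos_of_nonneg (by linarith) this.le
    · refine Summable.of_norm_bounded hu fun m => ?_
      have := hNpos m
      have h1 : Real.exp (-1 / N m) ≤ 1 :=
        Real.exp_le_one_iff.2 (div_nonpos_of_nonpos_of_nonneg (by linarith) this.le)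
      have h2 := Real.add_one_le_exp (-1 / N m)
      rw [norm_mul, Real.norm_eq_abs, Real.norm_eq_abs, abs_of_pos (by positivity),
        abs_of_nonpos (by linarith)]
      have h3 : -(Real.exp (-1 / N m) - 1) ≤ 1 / N m := by
        rw [neg_div] at h2 ⊢
        linarith
      calc _ ≤ 1 / N m * (1 / N m) := by gcongr
        _ = _ := by field_simp
  have hderiv : ∀ r : ℝ, 0 < r → (∑' m : ℕ, -(1 / N m ^ 2 * Real.exp (-r / N m))) =
      -(1 / r ^ 2) * ∑' m : ℕ, SEL.phi 0 (N m / r) := by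
    intro r hr
    rw [← tsum_mul_left]
    refine tsum_congr fun m => ?_
    have := hNpos m
    have h0 : ¬ N m / r ≤ 0 := not_le.2 (by positivity)
    simp only [SEL.phi, SEL.P, expNegInvGlue, h0, if_false]
    simp only [Polynomial.eval_pow, Polynomial.eval_X, inv_div, neg_div]
    field_simp
  obtain ⟨C, hC⟩ := SEL.integrate
    (fun r => (∑' m : ℕ, (1 / N m) * (Real.exp (-r / N m) - 1)) + 1 / q * Real.log r)
    (fun r => (∑' m : ℕ, -(1 / N m ^ 2 * Real.exp (-r / N m))) + 1 / q * r⁻¹)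
    (fun r hr => (hS r hr).add ((Real.hasDerivAt_log hr.ne').const_mul _)) (by
      intro K hK
      obtain ⟨k, rfl⟩ : ∃ k, K = k + 1 := ⟨K - 1, by omega⟩
      obtain ⟨A, hA⟩ := SEL.sum_bound q j hj hjq k
      have hA0 : 0 ≤ A := by simpa using (abs_nonneg _).trans (hA 1 one_pos)
      refine ⟨A, fun r hr1 => ?_⟩
      have hr : 0 < r := by linarith
      have hA := hA r hr
      have e : (∑' m : ℕ, -(1 / N m ^ 2 * Real.exp (-r / N m))) + 1 / q * r⁻¹ =
          -(1 / r ^ 2) * ((∑' m : ℕ, SEL.phi 0 (N m / r)) - r / q) := by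
        rw [hderiv r hr]
        field_simp
        ring
      rw [e, abs_mul, abs_neg, abs_of_pos (by positivity)]
      calc _ ≤ 1 / r ^ 2 * (A / r ^ (k + 1)) := by gcongr
        _ = A / r ^ (k + 1 + 1 + 1) := by field_simp; ring
        _ ≤ _ := by
          refine div_le_div_of_nonneg_left hA0 (by positivity) ?_
          exact pow_le_pow_right₀ hr1 (by omega))
  refine ⟨C, fun K hK => ?_⟩
  obtain ⟨C₁, h⟩ := hC K hK
  refine ⟨C₁, 1, fun r hr => ?_⟩
  convert h r hr using 2
  ring
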